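/- arXiv:1208.5460 — 4 statements merged into one kernel-verified Lean document; each statement's English description precedes it below -/
import Mathlib

section
/- Let A be a finite nonempty set of positive integers. If D_A contains every sufficiently large positive integer (i.e., there exists N₀ such that every integer d ≥ N₀ lies in D_A), then δ_A ≥ 1/2. -/
open Filter MeasureTheory
open scoped ENNReal

/-- The finite continued fraction `[a₁,…,a_k] = 1/(a₁ + 1/(a₂ + ⋯ + 1/a_k))`. -/
def cf : List ℤ → ℚ
  | [] => 0
  | a :: t => 1 / ((a : ℚ) + cf t)

/-- `d ∈ DA A` iff `d` is the bottom-right entry of some element of the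
multiplicative semigroup generated by the matrices `((0,1),(1,a))`, `a ∈ A`. -/
def DA (A : Set ℤ) : Set ℤ :=
  {d : ℤ | ∃ l : List ℤ, l ≠ [] ∧ (∀ a ∈ l, a ∈ A) ∧
    ((l.map fun a => !![(0 : ℤ), 1; 1, a]).prod) 1 1 = d}

/-- `CA A` is the set of real numbers whose infinite continued fraction
expansion has all partial quotients in `A`. -/
def CA (A : Set ℤ) : Set ℝ :=
  {x : ℝ | ∃ a : ℕ → ℤ, (∀ n, a n ∈ A) ∧
    Tendsto (fun k : ℕ => ((cf (List.ofFn fun i : Fin k => a i) : ℚ) : ℝ))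
      atTop (nhds x)}

/-- The vector `(p, q)` of numerator and denominator of `[a₁,…,a_k + s]`. -/
noncomputable def pd : List ℤ → ℝ → ℝ × ℝ
  | [], s => (s, 1)
  | a :: t, s => ((pd t s).2, (pd t s).1 + (a : ℝ) * (pd t s).2)

/-- Prefix of length `k`. -/
def pre : ℕ → (ℕ → ℤ) → List ℤ
  | 0, _ => []
  | k + 1, a => a 0 :: pre k (fun n => a (n + 1))

lemma pre_eq (k : ℕ) : ∀ a : ℕ → ℤ, pre k a = List.ofFn fun i : Fin k => a i := by
  induction k with
  | zero => intro a; simp [pre]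
  | succ k ih => intro a; simp [pre, List.ofFn_succ, ih]

lemma pre_length (k : ℕ) : ∀ a : ℕ → ℤ, (pre k a).length = k := by
  induction k with
  | zero => intro a; simp [pre]
  | succ k ih => intro a; simp [pre, ih]

lemma pre_congr (k : ℕ) : ∀ a b : ℕ → ℤ, (∀ i < k, a i = b i) → pre k a = pre k b := by
  induction k with
  | zero => intro a b _; simp [pre]
  | succ k ih =>
    intro a b h
    simp only [pre]
    rw [h 0 (by omega), ih _ (fun n => b (n + 1)) (fun i hi => h (i + 1) (by omega))]

lemma pre_pos (k : ℕ) : ∀ a : ℕ → ℤ, (∀ n, 1 ≤ a n) → ∀ x ∈ pre k a, 1 ≤ x := by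
  induction k with
  | zero => intro a _; simp [pre]
  | succ k ih =>
    intro a h x hx
    simp only [pre, List.mem_cons] at hx
    rcases hx with rfl | hx
    · exact h 0
    · exact ih _ (fun n => h (n + 1)) x hx

lemma pd_mat (l : List ℤ) : ((l.map fun a => !![(0 : ℤ), 1; 1, a]).prod 0 1 : ℝ) = (pd l 0).1 ∧
    ((l.map fun a => !![(0 : ℤ), 1; 1, a]).prod 1 1 : ℝ) = (pd l 0).2 := by
  induction l with
  | nil => simp [pd]
  | cons a l ih =>
    simp only [List.map_cons, List.prod_cons, Matrix.mul_apply, Fin.sum_univ_two, pd]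
    simp [ih.1, ih.2]

lemma pd_bd (l : List ℤ) (hl : ∀ x ∈ l, 1 ≤ x) (s : ℝ) (h0 : 0 ≤ s) (h1 : s ≤ 1) :
    0 ≤ (pd l s).1 ∧ (pd l s).1 ≤ (pd l s).2 ∧ 1 ≤ (pd l s).2 ∧
    (l.length : ℝ) + 1 ≤ (pd l s).1 + (pd l s).2 := by
  induction l with
  | nil => simp [pd, h0, h1]
  | cons a l ih =>
    obtain ⟨i1, i2, i3, i4⟩ := ih (fun x hx => hl x (List.mem_cons_of_mem _ hx))
    have ha : (1 : ℝ) ≤ a := by exact_mod_cast hl a (by simp)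
    simp only [pd, List.length_cons]
    push_cast
    refine ⟨?_, ?_, ?_, ?_⟩ <;> nlinarith

lemma pd_two (l : List ℤ) (hl : ∀ x ∈ l, 1 ≤ x) (s : ℝ) (h1 : s ≤ 1) :
    (pd l s).2 ≤ 2 * (pd l 0).2 ∧ 
    (pd l s).1 + (pd l s).2 ≤ 2 * ((pd l 0).1 + (pd l 0).2) := by
  induction l with
  | nil => simp only [pd]; constructor <;> linarith
  | cons a l ih =>
    obtain ⟨i1, i2⟩ := ih (fun x hx => hl x (List.mem_cons_of_mem _ hx))
    have ha : (1 : ℝ) ≤ a := by exact_mod_cast hl a (by simp)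
    simp only [pd]
    constructor <;> nlinarith

lemma pd_mono (l : List ℤ) (hl : ∀ x ∈ l, 1 ≤ x) (s : ℝ) (h0 : 0 ≤ s) :
    (pd l 0).1 ≤ (pd l s).1 ∧ (pd l 0).2 ≤ (pd l s).2 := by
  induction l with
  | nil => simp [pd, h0]
  | cons a l ih =>
    obtain ⟨i1, i2⟩ := ih (fun x hx => hl x (List.mem_cons_of_mem _ hx))
    have ha : (1 : ℝ) ≤ a := by exact_mod_cast hl a (by simp)
    simp only [pd]
    constructor <;> nlinarith

lemma pd_append (l m : List ℤ) (hl : ∀ x ∈ l, 1 ≤ x) (hm : ∀ x ∈ m, 1 ≤ x) :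
    (pd l 0).1 * (pd m 0).2 ≤ (pd (l ++ m) 0).1 ∧ 
    (pd l 0).2 * (pd m 0).2 ≤ (pd (l ++ m) 0).2 := by
  induction l with
  | nil => simp [pd, (pd_bd m hm 0 le_rfl zero_le_one).1]
  | cons a l ih =>
    obtain ⟨i1, i2⟩ := ih (fun x hx => hl x (List.mem_cons_of_mem _ hx))
    have ha : (1 : ℝ) ≤ a := by exact_mod_cast hl a (by simp)
    simp only [pd, List.cons_append]
    constructor <;> nlinarith

lemma pd_det (l : List ℤ) (s t : ℝ) :
    |(pd l s).1 * (pd l t).2 - (pd l t).1 * (pd l s).2| = |s - t| := by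
  induction l with
  | nil => simp [pd]
  | cons a l ih =>
    rw [← ih, ← abs_neg]
    simp only [pd]
    congr 1; ring

/-- `[a₁,…,a_k + s]`. -/
noncomputable def ev (l : List ℤ) (s : ℝ) : ℝ := (pd l s).1 / (pd l s).2

lemma ev_cons (a : ℤ) (l : List ℤ) (hl : ∀ x ∈ l, 1 ≤ x) (s : ℝ) (h0 : 0 ≤ s) (h1 : s ≤ 1) :
    ev (a :: l) s = 1 / (a + ev l s) := by
  have := pd_bd l hl s h0 h1
  have h : (pd l s).2 ≠ 0 := by linarith
  simp only [ev, pd]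
  rw [show (a : ℝ) + (pd l s).1 / (pd l s).2 = ((pd l s).1 + a * (pd l s).2) / (pd l s).2 by
    field_simp; ring]
  rw [one_div_div]

lemma ev_dist (l : List ℤ) (hl : ∀ x ∈ l, 1 ≤ x) (s : ℝ) (h0 : 0 ≤ s) (h1 : s ≤ 1)
    (t : ℝ) (g0 : 0 ≤ t) (g1 : t ≤ 1) : 
    |ev l s - ev l t| = |s - t| / ((pd l s).2 * (pd l t).2) := by
  have h := pd_bd l hl s h0 h1
  have g := pd_bd l hl t g0 g1
  rw [ev, ev, div_sub_div _ _ (by linarith) (by linarith), abs_div, mul_comm (pd l s).2 (pd l t).1,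
    pd_det, abs_of_pos (by nlinarith : 0 < (pd l s).2 * (pd l t).2)]

lemma cf_eq (l : List ℤ) (hl : ∀ x ∈ l, 1 ≤ x) : ((cf l : ℚ) : ℝ) = ev l 0 := by
  induction l with
  | nil => simp [cf, ev, pd]
  | cons a l ih =>
    have := ih (fun x hx => hl x (List.mem_cons_of_mem _ hx))
    rw [ev_cons a l (fun x hx => hl x (List.mem_cons_of_mem _ hx)) 0 le_rfl zero_le_one]
    simp [cf, this]

lemma ev_mem (l : List ℤ) (hl : ∀ x ∈ l, 1 ≤ x) (s : ℝ) (h0 : 0 ≤ s) (h1 : s ≤ 1) :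
    0 ≤ ev l s ∧ ev l s ≤ 1 := by
  have h := pd_bd l hl s h0 h1
  exact ⟨div_nonneg h.1 (by linarith), div_le_one_of_le₀ h.2.1 (by linarith)⟩

lemma ev_pre (k : ℕ) : ∀ (m : ℕ) (a : ℕ → ℤ), (∀ n, 1 ≤ a n) → k ≤ m →
    ∃ s, 0 ≤ s ∧ s ≤ 1 ∧ ev (pre m a) 0 = ev (pre k a) s := by
  induction k with
  | zero =>
    intro m a ha _
    have := ev_mem (pre m a) (pre_pos m a ha) 0 le_rfl zero_le_one
    exact ⟨_, this.1, this.2, by simp [ev, pre, pd]⟩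
  | succ k ih =>
    intro m a ha hm
    obtain ⟨m, rfl⟩ : ∃ m', m = m' + 1 := ⟨m - 1, by omega⟩
    obtain ⟨s, s0, s1, h⟩ := ih m (fun n => a (n + 1)) (fun n => ha (n + 1)) (by omega)
    refine ⟨s, s0, s1, ?_⟩
    simp only [pre]
    rw [ev_cons _ _ (pre_pos _ _ (fun n => ha (n + 1))) _ le_rfl zero_le_one,
      ev_cons _ _ (pre_pos _ _ (fun n => ha (n + 1))) _ s0 s1, h]

lemma pre_den (k : ℕ) (a : ℕ → ℤ) (ha : ∀ n, 1 ≤ a n) (s : ℝ) (h0 : 0 ≤ s) (h1 : s ≤ 1) :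
    ((k : ℝ) + 1) / 2 ≤ (pd (pre k a) s).2 := by
  have := pd_bd _ (pre_pos k a ha) s h0 h1
  rw [pre_length] at this
  linarith

lemma exists_lim (a : ℕ → ℤ) (ha : ∀ n, 1 ≤ a n) :
    ∃ x, Tendsto (fun k => ev (pre k a) 0) atTop (nhds x) := by
  apply cauchySeq_tendsto_of_complete
  have hb : Tendsto (fun k : ℕ => 2 * (1 / ((k : ℝ) + 1))) atTop (nhds 0) := by
    simpa using (tendsto_one_div_add_atTop_nhds_zero_nat (𝕜 := ℝ)).const_mul 2
  apply cauchySeq_of_le_tendsto_0' _ _ hb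
  intro n m hnm
  obtain ⟨s, s0, s1, h⟩ := ev_pre n m a ha hnm
  rw [h, Real.dist_eq, ev_dist _ (pre_pos n a ha) 0 le_rfl zero_le_one s s0 s1]
  have h1 := pre_den n a ha s s0 s1
  have h2 := (pd_bd _ (pre_pos n a ha) 0 le_rfl zero_le_one).2.2.1
  have hn : (0 : ℝ) < (n : ℝ) + 1 := by positivity
  have h3 : |0 - s| ≤ 1 := by rw [zero_sub, abs_neg, abs_of_nonneg s0]; exact s1
  have h4 : ((n : ℝ) + 1) / 2 ≤ (pd (pre n a) 0).2 * (pd (pre n a) s).2 := by nlinarith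
  calc |0 - s| / ((pd (pre n a) 0).2 * (pd (pre n a) s).2) ≤ 1 / (((n : ℝ) + 1) / 2) := by
        gcongr
    _ = _ := by field_simp

open Classical in
/-- The value of the infinite continued fraction. -/
noncomputable def phi (a : ℕ → ℤ) : ℝ :=
  if h : ∃ x, Tendsto (fun k => ev (pre k a) 0) atTop (nhds x) then h.choose else 0

lemma phi_lim (a : ℕ → ℤ) (ha : ∀ n, 1 ≤ a n) :
    Tendsto (fun k => ev (pre k a) 0) atTop (nhds (phi a)) := by
  have h := exists_lim a ha
  rw [phi, dif_pos h]; exact h.choose_spec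

lemma phi_mem (a : ℕ → ℤ) (ha : ∀ n, 1 ≤ a n) : 0 ≤ phi a ∧ phi a ≤ 1 := by
  have h := phi_lim a ha
  have hb := fun k => ev_mem (pre k a) (pre_pos k a ha) 0 le_rfl zero_le_one
  exact ⟨ge_of_tendsto' h fun k => (hb k).1, le_of_tendsto' h fun k => (hb k).2⟩

lemma phi_cons (a : ℕ → ℤ) (ha : ∀ n, 1 ≤ a n) :
    phi a = 1 / ((a 0 : ℝ) + phi (fun n => a (n + 1))) := by
  have h1 := (tendsto_add_atTop_iff_nat 1).2 (phi_lim a ha)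
  have h2 := phi_lim (fun n => a (n + 1)) (fun n => ha (n + 1))
  have hm := phi_mem (fun n => a (n + 1)) (fun n => ha (n + 1))
  have ha0 : (1 : ℝ) ≤ a 0 := by exact_mod_cast ha 0
  refine tendsto_nhds_unique h1 ?_
  have h3 := (tendsto_const_nhds (x := (1 : ℝ))).div (h2.const_add (a 0 : ℝ)) (by linarith)
  refine h3.congr fun k => ?_
  simp only [pre]
  rw [ev_cons _ _ (pre_pos _ _ (fun n => ha (n + 1))) _ le_rfl zero_le_one]
  rfl

lemma phi_pre (k : ℕ) : ∀ (a : ℕ → ℤ), (∀ n, 1 ≤ a n) →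
    phi a = ev (pre k a) (phi fun n => a (n + k)) := by
  induction k with
  | zero => intro a ha; simp [ev, pre, pd]
  | succ k ih =>
    intro a ha
    have hm := phi_mem (fun n => a (n + (k + 1))) (fun n => ha _)
    simp only [pre]
    rw [ev_cons _ _ (pre_pos _ _ (fun n => ha (n + 1))) _ hm.1 hm.2, phi_cons a ha,
      ih _ (fun n => ha (n + 1))]
    rfl

lemma phi_low (M : ℝ) (a : ℕ → ℤ) (ha : ∀ n, 1 ≤ a n) (hM : ∀ n, (a n : ℝ) ≤ M) :
    1 / (M + 1) ≤ phi a := by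
  have hm := phi_mem (fun n => a (n + 1)) (fun n => ha _)
  rw [phi_cons a ha]
  have ha0 : (1 : ℝ) ≤ a 0 := by exact_mod_cast ha 0
  have := hM 0
  apply one_div_le_one_div_of_le <;> linarith

lemma sep0 (M : ℝ) (a b : ℕ → ℤ) (ha : ∀ n, 1 ≤ a n) (hM : ∀ n, (a n : ℝ) ≤ M)
    (hb : ∀ n, 1 ≤ b n) (hMb : ∀ n, (b n : ℝ) ≤ M) (hab : a 0 < b 0) :
    1 / (M + 1) ^ 3 ≤ |phi a - phi b| := by
  have hm := phi_mem (fun n => a (n + 1)) (fun n => ha _)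
  have hm' := phi_mem (fun n => b (n + 1)) (fun n => hb _)
  have hl := phi_low M (fun n => b (n + 1)) (fun n => hb _) (fun n => hMb _)
  rw [phi_cons a ha, phi_cons b hb]
  have ha0 : (1 : ℝ) ≤ a 0 := by exact_mod_cast ha 0
  have hab' : (a 0 : ℝ) + 1 ≤ b 0 := by exact_mod_cast hab
  have h1 := hM 0
  have h2 := hMb 0
  set s := phi (fun n => a (n + 1))
  set t := phi (fun n => b (n + 1))
  rw [div_sub_div _ _ (by linarith) (by linarith)]
  refine le_trans ?_ (le_abs_self _)
  have hM0 : 0 < M + 1 := by linarith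
  rw [show 1 / (M + 1) ^ 3 = (1 / (M + 1)) / ((M + 1) * (M + 1)) by field_simp]
  apply div_le_div₀
  · linarith
  · linarith
  · apply mul_pos <;> linarith
  · apply mul_le_mul <;> linarith

lemma sep1 (M : ℝ) (a b : ℕ → ℤ) (ha : ∀ n, 1 ≤ a n) (hM : ∀ n, (a n : ℝ) ≤ M)
    (hb : ∀ n, 1 ≤ b n) (hMb : ∀ n, (b n : ℝ) ≤ M) (n : ℕ) (hn : ∀ i < n, a i = b i)
    (hab : a n ≠ b n) :
    1 / (pd (pre n a) 0).2 ^ 2 ≤ 4 * (M + 1) ^ 3 * |phi a - phi b| := by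
  have key : 1 / (M + 1) ^ 3 ≤ |phi (fun i => a (i + n)) - phi (fun i => b (i + n))| := by
    rcases lt_or_gt_of_ne hab with h | h
    · exact sep0 M _ _ (fun _ => ha _) (fun _ => hM _) (fun _ => hb _) (fun _ => hMb _) (by simpa)
    · rw [abs_sub_comm]
      exact sep0 M _ _ (fun _ => hb _) (fun _ => hMb _) (fun _ => ha _) (fun _ => hM _) (by simpa)
  have hm := phi_mem (fun i => a (i + n)) (fun n => ha _)
  have hm' := phi_mem (fun i => b (i + n)) (fun n => hb _)
  rw [phi_pre n a ha, phi_pre n b hb, ← pre_congr n a b hn,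
    ev_dist _ (pre_pos n a ha) _ hm.1 hm.2 _ hm'.1 hm'.2]
  set s := phi (fun i => a (i + n))
  set t := phi (fun i => b (i + n))
  have h1 := (pd_two _ (pre_pos n a ha) s hm.2).1
  have h2 := (pd_two _ (pre_pos n a ha) t hm'.2).1
  have h3 := (pd_bd _ (pre_pos n a ha) 0 le_rfl zero_le_one).2.2.1
  have h4 := (pd_bd _ (pre_pos n a ha) s hm.1 hm.2).2.2.1
  have h5 := (pd_bd _ (pre_pos n a ha) t hm'.1 hm'.2).2.2.1
  have hM0 : 0 < M + 1 := by
    have : (1 : ℝ) ≤ a 0 := by exact_mod_cast ha 0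
    linarith [hM 0]
  set q := (pd (pre n a) 0).2
  have h6 : (1 / (M + 1) ^ 3) / ((2 * q) * (2 * q)) ≤
      |s - t| / ((pd (pre n a) s).2 * (pd (pre n a) t).2) := by
    gcongr
  calc 1 / q ^ 2 = 4 * (M + 1) ^ 3 * ((1 / (M + 1) ^ 3) / ((2 * q) * (2 * q))) := by
        field_simp; ring
    _ ≤ _ := by gcongr

lemma pre_getD (d : ℤ) (l : List ℤ) : ∀ k, k ≤ l.length → pre k (fun n => l.getD n d) = l.take k := by
  induction l with
  | nil => intro k hk; obtain rfl : k = 0 := by simpa using hk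
           simp [pre]
  | cons b l ih =>
    intro k hk
    cases k with
    | zero => simp [pre]
    | succ k =>
      have := ih k (by simpa using hk)
      simp only [pre, List.take_succ_cons, List.getD_cons_zero, List.getD_cons_succ, this]

lemma count_lem (A : Set ℤ) (hfin : A.Finite) (hne : A.Nonempty) (hpos : ∀ a ∈ A, 1 ≤ a)
    (F : Finset ℕ) (w : ℕ → List ℤ) (hw : ∀ i, ∀ x ∈ w i, x ∈ A)
    (hs : ∑ i ∈ F, 1 / (pd (w i) 0).2 ≤ 1 / 2)
    (hc : ∀ a : ℕ → ℤ, (∀ n, a n ∈ A) → ∃ i ∈ F, pre (w i).length a = w i) :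
    Summable (fun l : {l : List ℤ // ∀ x ∈ l, x ∈ A} => 1 / (pd l 0).2) := by
  classical
  obtain ⟨d, hd⟩ := hne
  have hq : ∀ l : List ℤ, (∀ x ∈ l, x ∈ A) → 1 ≤ (pd l 0).2 := fun l hl =>
    (pd_bd l (fun x hx => hpos x (hl x hx)) 0 le_rfl zero_le_one).2.2.1
  have hS : ∀ n : ℕ, {l : List ℤ | (∀ x ∈ l, x ∈ A) ∧ l.length ≤ n}.Finite := by
    intro n
    have : Finite A := hfin
    refine ((List.finite_length_le A n).image (List.map (fun x : A => (x : ℤ)))).subset ?_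
    rintro l ⟨h1, h2⟩
    refine ⟨l.attach.map (fun x => ⟨x.1, h1 x.1 x.2⟩), by simpa using h2, by simp⟩
  set S : ℕ → Finset (List ℤ) := fun n => (hS n).toFinset with hSdef
  have memS : ∀ n l, l ∈ S n ↔ (∀ x ∈ l, x ∈ A) ∧ l.length ≤ n := by simp [hSdef]
  set f : List ℤ → ℝ := fun l => 1 / (pd l 0).2 with hf
  have f0 : ∀ l, (∀ x ∈ l, x ∈ A) → 0 ≤ f l := fun l hl => by
    have := hq l hl
    simp only [hf]; positivity
  set L := F.sup (fun i => (w i).length) with hL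
  have key : ∀ n, ∑ l ∈ S n, f l ≤ 2 * ∑ l ∈ S L, f l := by
    intro n
    have pw : ∀ l ∈ S n, f l ≤ (if l ∈ S L then f l else 0) +
        ∑ i ∈ F, ∑ v ∈ S n, if w i ++ v = l then f (w i) * f v else 0 := by
      intro l hl
      have hl' := (memS n l).1 hl
      have inn : ∀ i, ∀ v ∈ S n, 0 ≤ if w i ++ v = l then f (w i) * f v else 0 := by
        intro i v hv
        split_ifs
        · exact mul_nonneg (f0 _ (hw i)) (f0 _ ((memS n v).1 hv).1)
        · exact le_rfl
      have nn : ∀ i ∈ F, 0 ≤ ∑ v ∈ S n, if w i ++ v = l then f (w i) * f v else 0 :=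
        fun i _ => Finset.sum_nonneg (inn i)
      by_cases hlL : l ∈ S L
      · rw [if_pos hlL]
        linarith [Finset.sum_nonneg nn]
      · rw [if_neg hlL, zero_add]
        have hlen : L < l.length := by
          by_contra h
          exact hlL ((memS L l).2 ⟨hl'.1, by omega⟩)
        obtain ⟨i, hi, hpi⟩ := hc (fun n => l.getD n d) (by
          intro n
          by_cases hn : n < l.length
          · rw [List.getD_eq_getElem _ _ hn]; exact hl'.1 _ (List.getElem_mem hn)
          · rw [List.getD_eq_default _ _ (by omega)]; exact hd)
        have hile : (w i).length ≤ L := Finset.le_sup (f := fun i => (w i).length) hi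
        rw [pre_getD d l _ (by omega)] at hpi
        set v := l.drop (w i).length with hv
        have hlv : w i ++ v = l := by
          conv_lhs => rw [← hpi]
          rw [hv, List.take_append_drop]
        have hvS : v ∈ S n := by
          refine (memS n v).2 ⟨fun x hx => hl'.1 x (List.mem_of_mem_drop hx), ?_⟩
          rw [hv, List.length_drop]; omega
        have hvA := ((memS n v).1 hvS).1
        have h1 : f l ≤ f (w i) * f v := by
          have := (pd_append (w i) v (fun x hx => hpos x (hw i x hx))
            (fun x hx => hpos x (hvA x hx))).2
          rw [hlv] at this
          have ha := hq _ (hw i)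
          have hb := hq _ hvA
          simp only [hf]
          rw [div_mul_div_comm, one_mul]
          apply one_div_le_one_div_of_le _ this
          positivity
        calc f l ≤ if w i ++ v = l then f (w i) * f v else 0 := by rw [if_pos hlv]; exact h1
          _ ≤ ∑ v ∈ S n, if w i ++ v = l then f (w i) * f v else 0 :=
            Finset.single_le_sum (f := fun v => if w i ++ v = l then f (w i) * f v else 0)
              (inn i) hvS
          _ ≤ _ := Finset.single_le_sum
              (f := fun i => ∑ v ∈ S n, if w i ++ v = l then f (w i) * f v else 0) nn hi
    have h1 := Finset.sum_le_sum pw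
    rw [Finset.sum_add_distrib, Finset.sum_ite_mem, Finset.sum_comm] at h1
    have h2 : ∑ l ∈ S n ∩ S L, f l ≤ ∑ l ∈ S L, f l :=
      Finset.sum_le_sum_of_subset_of_nonneg Finset.inter_subset_right
        (fun l hl _ => f0 l ((memS L l).1 hl).1)
    have T0 : 0 ≤ ∑ l ∈ S n, f l := Finset.sum_nonneg fun l hl => f0 l ((memS n l).1 hl).1
    have h3 : ∑ i ∈ F, ∑ l ∈ S n, ∑ v ∈ S n, (if w i ++ v = l then f (w i) * f v else 0) ≤
        ∑ i ∈ F, f (w i) * ∑ v ∈ S n, f v := by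
      refine Finset.sum_le_sum fun i _ => ?_
      rw [Finset.sum_comm, Finset.mul_sum]
      refine Finset.sum_le_sum fun v hv => ?_
      rw [Finset.sum_ite_eq]
      split_ifs
      · exact le_rfl
      · exact mul_nonneg (f0 _ (hw i)) (f0 _ ((memS n v).1 hv).1)
    rw [← Finset.sum_mul] at h3
    have h4 : (∑ i ∈ F, f (w i)) * ∑ v ∈ S n, f v ≤ 1 / 2 * ∑ v ∈ S n, f v :=
      mul_le_mul_of_nonneg_right hs T0
    linarith
  refine summable_of_sum_le (c := 2 * ∑ l ∈ S L, f l) (fun l => f0 l.1 l.2) fun u => ?_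
  refine le_trans ?_ (key (u.sup fun l => l.1.length))
  have : ∑ x ∈ u, 1 / (pd x.1 0).2 = ∑ l ∈ u.map (Function.Embedding.subtype _), f l := by
    rw [Finset.sum_map]; rfl
  rw [this]
  refine Finset.sum_le_sum_of_subset_of_nonneg ?_ (fun l hl _ => f0 l ((memS _ l).1 hl).1)
  intro l hl
  obtain ⟨x, hx, rfl⟩ := Finset.mem_map.1 hl
  exact (memS _ _).2 ⟨x.2, Finset.le_sup (f := fun l => l.1.length) hx⟩

lemma word_lem (A : Set ℤ) (hfin : A.Finite) (hne : A.Nonempty) (hpos : ∀ a ∈ A, 1 ≤ a) :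
    ∃ C : ℝ≥0∞, C ≠ ⊤ ∧ ∀ (U : Set ℝ) (ε : ℝ≥0∞), 0 < ε → ∃ l : List ℤ, (∀ x ∈ l, x ∈ A) ∧
      (∀ a : ℕ → ℤ, (∀ n, a n ∈ A) → phi a ∈ U → pre l.length a = l) ∧
      ENNReal.ofReal (1 / (pd l 0).2) ≤ C * (⨆ _ : U.Nonempty, Metric.ediam U ^ (1 / 2 : ℝ)) + ε := by
  classical
  obtain ⟨d, hd⟩ := hne
  obtain ⟨M, hM⟩ := hfin.bddAbove
  have hMr : ∀ a : ℕ → ℤ, (∀ n, a n ∈ A) → ∀ n, (a n : ℝ) ≤ M := fun a ha n => by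
    exact_mod_cast hM (ha n)
  have preA : ∀ k, ∀ a : ℕ → ℤ, (∀ n, a n ∈ A) → ∀ x ∈ pre k a, x ∈ A := by
    intro k
    induction k with
    | zero => intro a _; simp [pre]
    | succ k ih =>
      intro a h x hx
      simp only [pre, List.mem_cons] at hx
      rcases hx with rfl | hx
      · exact h 0
      · exact ih _ (fun n => h (n + 1)) x hx
  set K : ℝ≥0∞ := ENNReal.ofReal (4 * ((M : ℝ) + 1) ^ 3)
  refine ⟨K ^ (1 / 2 : ℝ), ENNReal.rpow_ne_top_of_nonneg (by norm_num) ENNReal.ofReal_ne_top, ?_⟩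
  intro U ε hε
  by_cases h : ∃ n, ∃ a b : ℕ → ℤ, (∀ n, a n ∈ A) ∧ (∀ n, b n ∈ A) ∧ phi a ∈ U ∧ phi b ∈ U ∧
      a n ≠ b n
  · obtain ⟨a, b, ha, hb, haU, hbU, hab⟩ := Nat.find_spec h
    set n := Nat.find h with hn
    have hmin : ∀ i < n, ∀ a b : ℕ → ℤ, (∀ n, a n ∈ A) → (∀ n, b n ∈ A) → phi a ∈ U → phi b ∈ U →
        a i = b i := by
      intro i hi a b h1 h2 h3 h4
      by_contra h5
      exact Nat.find_min h hi ⟨a, b, h1, h2, h3, h4, h5⟩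
    refine ⟨pre n a, preA n a ha, ?_, ?_⟩
    · intro c hc hcU
      rw [pre_length]
      exact pre_congr n c a fun i hi => hmin i hi c a hc ha hcU haU
    · refine le_trans ?_ le_self_add
      rw [iSup_pos ⟨_, haU⟩, ← ENNReal.mul_rpow_of_nonneg _ _ (by norm_num)]
      have hs := sep1 M a b (fun n => hpos _ (ha n)) (hMr a ha) (fun n => hpos _ (hb n)) (hMr b hb) n
        (fun i hi => hmin i hi a b ha hb haU hbU) hab
      have hq := (pd_bd _ (pre_pos n a (fun n => hpos _ (ha n))) 0 le_rfl zero_le_one).2.2.1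
      set q := (pd (pre n a) 0).2
      have hM0 : (0 : ℝ) ≤ 4 * ((M : ℝ) + 1) ^ 3 := by
        have h1 := hMr a ha 0
        have h2 : (1 : ℝ) ≤ a 0 := by exact_mod_cast hpos _ (ha 0)
        have : (0 : ℝ) ≤ (M : ℝ) + 1 := by linarith
        positivity
      have h1 : ENNReal.ofReal (1 / q ^ 2) ≤ K * Metric.ediam U := by
        refine (ENNReal.ofReal_le_ofReal hs).trans ?_
        rw [ENNReal.ofReal_mul hM0]
        gcongr
        rw [← Real.dist_eq, ← edist_dist]
        exact Metric.edist_le_ediam_of_mem haU hbU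
      have h2 : ENNReal.ofReal (1 / q) = ENNReal.ofReal (1 / q ^ 2) ^ (1 / 2 : ℝ) := by
        rw [ENNReal.ofReal_rpow_of_nonneg (by positivity) (by norm_num), ← Real.sqrt_eq_rpow,
          ← one_div_pow, Real.sqrt_sq (by positivity)]
      rw [h2]
      exact ENNReal.rpow_le_rpow h1 (by norm_num)
  · push Not at h
    obtain ⟨a, ha, haU⟩ : ∃ a : ℕ → ℤ, (∀ n, a n ∈ A) ∧
        ∀ c : ℕ → ℤ, (∀ n, c n ∈ A) → phi c ∈ U → c = a := by
      by_cases h2 : ∃ a : ℕ → ℤ, (∀ n, a n ∈ A) ∧ phi a ∈ U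
      · obtain ⟨a, ha, haU⟩ := h2
        exact ⟨a, ha, fun c hc hcU => funext fun n => h n c a hc ha hcU haU⟩
      · exact ⟨fun _ => d, fun _ => hd, fun c hc hcU => (h2 ⟨c, hc, hcU⟩).elim⟩
    have hb : Tendsto (fun k : ℕ => ENNReal.ofReal (2 * (1 / ((k : ℝ) + 1)))) atTop (nhds 0) := by
      have : Tendsto (fun k : ℕ => 2 * (1 / ((k : ℝ) + 1))) atTop (nhds 0) := by
        simpa using (tendsto_one_div_add_atTop_nhds_zero_nat (𝕜 := ℝ)).const_mul 2
      simpa using ENNReal.tendsto_ofReal this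
    obtain ⟨k, hk⟩ := (hb.eventually (gt_mem_nhds hε)).exists
    refine ⟨pre k a, preA k a ha, ?_, ?_⟩
    · intro c hc hcU
      rw [haU c hc hcU, pre_length]
    · refine le_trans ?_ le_add_self
      refine le_trans (ENNReal.ofReal_le_ofReal ?_) hk.le
      have := pre_den k a (fun n => hpos _ (ha n)) 0 le_rfl zero_le_one
      rw [show 2 * (1 / ((k : ℝ) + 1)) = 1 / (((k : ℝ) + 1) / 2) by field_simp]
      apply one_div_le_one_div_of_le _ this
      positivity

lemma open_lem (A : Set ℤ) (k : ℕ) : ∀ l : List ℤ,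
    IsOpen {a : ℕ → A | pre k (fun n => (a n : ℤ)) = l} := by
  induction k with
  | zero => intro l; simp only [pre]; exact isOpen_const
  | succ k ih =>
    intro l
    cases l with
    | nil => simp [pre]
    | cons b l =>
      simp only [pre, List.cons.injEq]
      have h1 : IsOpen {a : ℕ → A | (a 0 : ℤ) = b} :=
        (isOpen_discrete ({b} : Set ℤ)).preimage
          (continuous_subtype_val.comp (continuous_apply 0))
      have h2 : IsOpen {a : ℕ → A | pre k (fun n => (a (n + 1) : ℤ)) = l} :=
        (ih l).preimage (f := fun (a : ℕ → A) n => a (n + 1))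
          (continuous_pi fun n => continuous_apply (n + 1))
      exact h1.inter h2

theorem stmt7 (A : Set ℤ) (hfin : A.Finite) (hne : A.Nonempty)
    (hpos : ∀ a ∈ A, 1 ≤ a)
    (hfull : ∃ N₀ : ℤ, ∀ d : ℤ, N₀ ≤ d → d ∈ DA A) :
    (1 / 2 : ℝ≥0∞) ≤ dimH (CA A) := by
  classical
  by_contra hlt
  rw [not_le] at hlt
  have hmu : μH[((1 / 2 : NNReal) : ℝ)] (CA A) = 0 := by
    apply hausdorffMeasure_of_dimH_lt
    simpa using hlt
  have hhalf : ((1 / 2 : NNReal) : ℝ) = 1 / 2 := by simp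
  rw [hhalf, Measure.hausdorffMeasure_apply] at hmu
  obtain ⟨C, hC, hword⟩ := word_lem A hfin hne hpos
  obtain ⟨δ, hδ0, hδ⟩ := ENNReal.exists_nnreal_pos_mul_lt hC
    (show (1 / 4 : ℝ≥0∞) ≠ 0 by simp)
  have h1 : (⨅ (t : ℕ → Set ℝ) (_ : CA A ⊆ ⋃ n, t n) (_ : ∀ n, Metric.ediam (t n) ≤ 1),
      ∑' n, ⨆ _ : (t n).Nonempty, Metric.ediam (t n) ^ (1 / 2 : ℝ)) < (δ : ℝ≥0∞) := by
    refine lt_of_le_of_lt ?_ (ENNReal.coe_pos.2 hδ0)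
    rw [← hmu]
    exact le_iSup₂_of_le (1 : ℝ≥0∞) zero_lt_one le_rfl
  simp only [iInf_lt_iff] at h1
  obtain ⟨t, htc, -, hts⟩ := h1
  obtain ⟨e, he0, hes⟩ := ENNReal.exists_pos_sum_of_countable'
    (show (1 / 4 : ℝ≥0∞) ≠ 0 by simp) ℕ
  choose w hwA hwp hwq using fun n => hword (t n) (e n) (he0 n)
  have hcov : ∀ a : ℕ → ℤ, (∀ n, a n ∈ A) → ∃ n, pre (w n).length a = w n := by
    intro a ha
    have ha1 : ∀ n, 1 ≤ a n := fun n => hpos _ (ha n)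
    have hmem : phi a ∈ CA A := by
      refine ⟨a, ha, (phi_lim a ha1).congr fun k => ?_⟩
      rw [← pre_eq, cf_eq _ (pre_pos k a ha1)]
    obtain ⟨n, hn⟩ := Set.mem_iUnion.1 (htc hmem)
    exact ⟨n, hwp n a ha hn⟩
  have : Finite A := hfin
  obtain ⟨F, hF⟩ := (isCompact_univ (X := ℕ → A)).elim_finite_subcover
    (fun i => {a : ℕ → A | pre (w i).length (fun n => (a n : ℤ)) = w i})
    (fun i => open_lem A _ _) (fun a _ => by
      obtain ⟨n, hn⟩ := hcov (fun n => a n) (fun n => (a n).2)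
      exact Set.mem_iUnion.2 ⟨n, hn⟩)
  have hq : ∀ l : List ℤ, (∀ x ∈ l, x ∈ A) → 1 ≤ (pd l 0).2 := fun l hl =>
    (pd_bd l (fun x hx => hpos x (hl x hx)) 0 le_rfl zero_le_one).2.2.1
  have hsum : ∑ i ∈ F, 1 / (pd (w i) 0).2 ≤ 1 / 2 := by
    rw [← ENNReal.ofReal_le_ofReal_iff (by norm_num), ENNReal.ofReal_sum_of_nonneg
      (fun i _ => by have := hq _ (hwA i); positivity)]
    calc ∑ i ∈ F, ENNReal.ofReal (1 / (pd (w i) 0).2)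
        ≤ ∑' i, ENNReal.ofReal (1 / (pd (w i) 0).2) := ENNReal.sum_le_tsum F
      _ ≤ ∑' i, (C * (⨆ _ : (t i).Nonempty, Metric.ediam (t i) ^ (1 / 2 : ℝ)) + e i) :=
          ENNReal.tsum_le_tsum hwq
      _ = C * (∑' i, ⨆ _ : (t i).Nonempty, Metric.ediam (t i) ^ (1 / 2 : ℝ)) + ∑' i, e i := by
          rw [ENNReal.tsum_add, ENNReal.tsum_mul_left]
      _ ≤ C * δ + 1 / 4 := by gcongr
      _ ≤ 1 / 4 + 1 / 4 := by rw [mul_comm]; gcongr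
      _ = ENNReal.ofReal (1 / 2) := by
          rw [show (1 / 4 : ℝ≥0∞) = ENNReal.ofReal (1 / 4) by
            rw [ENNReal.ofReal_div_of_pos (by norm_num)]; simp,
            ← ENNReal.ofReal_add (by norm_num) (by norm_num)]
          norm_num
  have hsummable := count_lem A hfin hne hpos F w hwA hsum (fun a ha => by
    have := hF (Set.mem_univ (fun n => (⟨a n, ha n⟩ : A)))
    simpa using this)
  obtain ⟨N₀, hN⟩ := hfull
  have hN' : ∀ n : ℕ, ∃ l : {l : List ℤ // ∀ x ∈ l, x ∈ A},
      (pd l 0).2 = ((n + N₀.toNat : ℕ) : ℝ) := by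
    intro n
    obtain ⟨l, -, hlA, hl⟩ := hN ((n + N₀.toNat : ℕ) : ℤ) (by omega)
    refine ⟨⟨l, hlA⟩, ?_⟩
    have := (pd_mat l).2
    rw [hl] at this
    rw [← this, Int.cast_natCast]
  choose g hg using hN'
  have hinj : Function.Injective g := by
    intro m n hmn
    have h1 := hg m
    rw [hmn, hg n] at h1
    have : n + N₀.toNat = m + N₀.toNat := by exact_mod_cast h1
    omega
  have h2 := hsummable.comp_injective hinj
  have h3 : Summable (fun n : ℕ => 1 / ((n + N₀.toNat : ℕ) : ℝ)) := by
    refine h2.congr fun n => ?_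
    simp only [Function.comp, hg]
  exact Real.not_summable_one_div_natCast
    ((summable_nat_add_iff (f := fun n : ℕ => 1 / (n : ℝ)) N₀.toNat).1 h3)
end

section
/- Let A = {2,4,6,8,10}. For every matrix M ∈ Γ_A with second column (b,d) = (M₁₂, M₂₂), either b is even and d ≡ 1 (mod 4), or b ≡ 1 (mod 4) and d is even. Consequently every d ∈ D_A satisfies d ≢ 3 (mod 4), so D_A does not contain every sufficiently large positive integer. -/
theorem stmt8_aux (l : List ℤ) (h : ∀ a ∈ l, a ∈ ({2, 4, 6, 8, 10} : Set ℤ)) :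
      ((((l.map fun a => !![(0 : ℤ), 1; 1, a]).prod) 0 1 % 2 = 0 ∧
        ((l.map fun a => !![(0 : ℤ), 1; 1, a]).prod) 1 1 % 4 = 1) ∨
       (((l.map fun a => !![(0 : ℤ), 1; 1, a]).prod) 0 1 % 4 = 1 ∧
        ((l.map fun a => !![(0 : ℤ), 1; 1, a]).prod) 1 1 % 2 = 0)) := by
  induction l with
  | nil => left; simp
  | cons a l ih =>
    have ih := ih (fun x hx => h x (List.mem_cons_of_mem _ hx))
    have ha := h a List.mem_cons_self
    simp only [List.map_cons, List.prod_cons, Matrix.mul_apply, Fin.sum_univ_two]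
    generalize (l.map fun a => !![(0 : ℤ), 1; 1, a]).prod = M at ih ⊢
    simp only [Set.mem_insert_iff, Set.mem_singleton_iff] at ha
    simp
    rcases ha with rfl | rfl | rfl | rfl | rfl <;> omega

theorem stmt8 :
    (∀ l : List ℤ, l ≠ [] → (∀ a ∈ l, a ∈ ({2, 4, 6, 8, 10} : Set ℤ)) →
      ((((l.map fun a => !![(0 : ℤ), 1; 1, a]).prod) 0 1 % 2 = 0 ∧
        ((l.map fun a => !![(0 : ℤ), 1; 1, a]).prod) 1 1 % 4 = 1) ∨
       (((l.map fun a => !![(0 : ℤ), 1; 1, a]).prod) 0 1 % 4 = 1 ∧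
        ((l.map fun a => !![(0 : ℤ), 1; 1, a]).prod) 1 1 % 2 = 0))) ∧
    (∀ d ∈ DA ({2, 4, 6, 8, 10} : Set ℤ), ¬ d % 4 = 3) ∧
    ¬ (∃ N₀ : ℤ, ∀ d : ℤ, N₀ ≤ d → d ∈ DA ({2, 4, 6, 8, 10} : Set ℤ)) := by
  have key : ∀ d ∈ DA ({2, 4, 6, 8, 10} : Set ℤ), ¬ d % 4 = 3 := by
    rintro d ⟨l, -, hl, rfl⟩
    have := stmt8_aux l hl
    omega
  refine ⟨fun l _ hl => stmt8_aux l hl, key, ?_⟩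
  rintro ⟨N, hN⟩
  exact key (4 * |N| + 3) (hN _ (by have := le_abs_self N; have := abs_nonneg N; omega)) (by omega)
end

section
/- Let c₁, c₂, c₃, c₄ be points of the Euclidean plane ℝ² and r₁, r₂, r₃, r₄ > 0 real numbers. (i) If the four circles with centers c_i and radii r_i are pairwise externally tangent, i.e. dist(c_i, c_j) = r_i + r_j for all i ≠ j, then Q(1/r₁, 1/r₂, 1/r₃, 1/r₄) = 0. (ii) If circles 2, 3, 4 are pairwise externally tangent and each is internally tangent to circle 1, i.e. dist(c_i, c_j) = r_i + r_j for 2 ≤ i < j ≤ 4 and dist(c₁, c_j) = r₁ − r_j for j = 2, 3, 4, then Q(−1/r₁, 1/r₂, 1/r₃, 1/r₄) = 0. -/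
/-- The Descartes quadratic form
`Q(b₁,b₂,b₃,b₄) = 2(b₁² + b₂² + b₃² + b₄²) − (b₁ + b₂ + b₃ + b₄)²`. -/
def descartesQ (b₁ b₂ b₃ b₄ : ℝ) : ℝ :=
  2 * (b₁ ^ 2 + b₂ ^ 2 + b₃ ^ 2 + b₄ ^ 2) - (b₁ + b₂ + b₃ + b₄) ^ 2

theorem gram_aux (a b c d u1 u2 v1 v2 w1 w2 : ℝ) (ha : a ≠ 0) (hb : b ≠ 0) (hc : c ≠ 0)
    (hd : d ≠ 0)
    (h01 : u1 ^ 2 + u2 ^ 2 = (a + b) ^ 2) (h02 : v1 ^ 2 + v2 ^ 2 = (a + c) ^ 2)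
    (h03 : w1 ^ 2 + w2 ^ 2 = (a + d) ^ 2)
    (h12 : (u1 - v1) ^ 2 + (u2 - v2) ^ 2 = (b + c) ^ 2)
    (h13 : (u1 - w1) ^ 2 + (u2 - w2) ^ 2 = (b + d) ^ 2)
    (h23 : (v1 - w1) ^ 2 + (v2 - w2) ^ 2 = (c + d) ^ 2) :
    descartesQ (1 / a) (1 / b) (1 / c) (1 / d) = 0 := by
  have e12 : u1 * v1 + u2 * v2 = a ^ 2 + a * b + a * c - b * c := by linarith
  have e13 : u1 * w1 + u2 * w2 = a ^ 2 + a * b + a * d - b * d := by linarith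
  have e23 : v1 * w1 + v2 * w2 = a ^ 2 + a * c + a * d - c * d := by linarith
  have key : ∀ A B C D E F : ℝ, u1 ^ 2 + u2 ^ 2 = A → v1 ^ 2 + v2 ^ 2 = B →
      w1 ^ 2 + w2 ^ 2 = C → u1 * v1 + u2 * v2 = D → u1 * w1 + u2 * w2 = E →
      v1 * w1 + v2 * w2 = F →
      A * B * C + 2 * D * E * F - A * F ^ 2 - B * E ^ 2 - C * D ^ 2 = 0 := by
    rintro _ _ _ _ _ _ rfl rfl rfl rfl rfl rfl
    ring
  have h := key _ _ _ _ _ _ h01 h02 h03 e12 e13 e23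
  have h2 : (a * b * c * d) ^ 2 * descartesQ (1 / a) (1 / b) (1 / c) (1 / d) = 0 := by
    have : (a * b * c * d) ^ 2 * descartesQ (1 / a) (1 / b) (1 / c) (1 / d) =
      2 * ((b * c * d) ^ 2 + (a * c * d) ^ 2 + (a * b * d) ^ 2 + (a * b * c) ^ 2)
        - (b * c * d + a * c * d + a * b * d + a * b * c) ^ 2 := by
      unfold descartesQ
      field_simp
    rw [this]
    linarith
  have h3 : (a * b * c * d) ^ 2 ≠ 0 := by positivity
  exact (mul_eq_zero.mp h2).resolve_left h3

theorem dist_aux (x y : EuclideanSpace ℝ (Fin 2)) (s : ℝ) (h : dist x y = s) :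
    (x 0 - y 0) ^ 2 + (x 1 - y 1) ^ 2 = s ^ 2 := by
  rw [← h, EuclideanSpace.dist_eq, Real.sq_sqrt (by positivity)]
  simp [Fin.sum_univ_two, Real.dist_eq, sq_abs]

theorem stmt9 (c : Fin 4 → EuclideanSpace ℝ (Fin 2)) (r : Fin 4 → ℝ)
    (hr : ∀ i, 0 < r i) :
    ((∀ i j : Fin 4, i ≠ j → dist (c i) (c j) = r i + r j) →
      descartesQ (1 / r 0) (1 / r 1) (1 / r 2) (1 / r 3) = 0) ∧
    (((∀ i j : Fin 4, 0 < i → 0 < j → i ≠ j → dist (c i) (c j) = r i + r j) ∧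
      (∀ j : Fin 4, 0 < j → dist (c 0) (c j) = r 0 - r j)) →
      descartesQ (-(1 / r 0)) (1 / r 1) (1 / r 2) (1 / r 3) = 0) := by
  have ne : ∀ i, r i ≠ 0 := fun i => (hr i).ne'
  constructor
  · intro h
    have k := fun i j hij => dist_aux _ _ _ (h i j hij)
    have h01 := k 0 1 (by decide)
    have h02 := k 0 2 (by decide)
    have h03 := k 0 3 (by decide)
    have h12 := k 1 2 (by decide)
    have h13 := k 1 3 (by decide)
    have h23 := k 2 3 (by decide)
    exact gram_aux _ _ _ _ (c 0 0 - c 1 0) (c 0 1 - c 1 1) (c 0 0 - c 2 0) (c 0 1 - c 2 1)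
      (c 0 0 - c 3 0) (c 0 1 - c 3 1) (ne 0) (ne 1) (ne 2) (ne 3)
      (by linarith) (by linarith) (by linarith) (by linarith) (by linarith) (by linarith)
  · rintro ⟨h, h'⟩
    have k := fun i j hi hj hij => dist_aux _ _ _ (h i j hi hj hij)
    have k' := fun j hj => dist_aux _ _ _ (h' j hj)
    have h01 := k' 1 (by decide)
    have h02 := k' 2 (by decide)
    have h03 := k' 3 (by decide)
    have h12 := k 1 2 (by decide) (by decide) (by decide)
    have h13 := k 1 3 (by decide) (by decide) (by decide)
    have h23 := k 2 3 (by decide) (by decide) (by decide)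
    have := gram_aux (-r 0) _ _ _ (c 0 0 - c 1 0) (c 0 1 - c 1 1) (c 0 0 - c 2 0)
      (c 0 1 - c 2 1) (c 0 0 - c 3 0) (c 0 1 - c 3 1) (neg_ne_zero.mpr (ne 0)) (ne 1) (ne 2) (ne 3)
      (by linarith) (by linarith) (by linarith) (by linarith) (by linarith) (by linarith)
    rwa [one_div_neg_eq_neg_one_div] at this
end

section
/- For every γ ∈ Γ and every coordinate j ∈ {1,2,3,4}, the entry (γ·v₀)_j is congruent modulo 24 to one of 2, 3, 6, 11, 14, 15, 18, 23. In particular, every curvature n ∈ B lies in one of these eight residue classes modulo 24. -/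
/-- The four generators `S₁, S₂, S₃, S₄` of the Apollonian group. -/
def Sgen : Fin 4 → Matrix (Fin 4) (Fin 4) ℤ :=
  ![!![-1, 2, 2, 2; 0, 1, 0, 0; 0, 0, 1, 0; 0, 0, 0, 1],
    !![1, 0, 0, 0; 2, -1, 2, 2; 0, 0, 1, 0; 0, 0, 0, 1],
    !![1, 0, 0, 0; 0, 1, 0, 0; 2, 2, -1, 2; 0, 0, 0, 1],
    !![1, 0, 0, 0; 0, 1, 0, 0; 0, 0, 1, 0; 2, 2, 2, -1]]

/-- Membership in the Apollonian group `Γ = ⟨S₁, S₂, S₃, S₄⟩`: since the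
generators are involutions, the elements of `Γ` are exactly the products of
(possibly empty) words in the generators. -/
def ApollonianMem (γ : Matrix (Fin 4) (Fin 4) ℤ) : Prop :=
  ∃ l : List (Fin 4), γ = (l.map Sgen).prod

/-- The root quadruple `(−10, 18, 23, 27)` of the gasket. -/
def rootQuadruple : Fin 4 → ℤ := ![-10, 18, 23, 27]

/-- `B` is the set of curvatures of circles in the gasket: the entries of the
vectors in the orbit `Γ·v₀`. -/
def curvatures : Set ℤ :=
  {n : ℤ | ∃ (γ : Matrix (Fin 4) (Fin 4) ℤ) (j : Fin 4),
    ApollonianMem γ ∧ (γ.mulVec rootQuadruple) j = n}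

def QInv (v : Fin 4 → ℤ) : Prop :=
  (v 0 % 4 = 2 ∧ v 1 % 4 = 2 ∧ v 2 % 8 = 7 ∧ v 3 % 8 = 3) ∧
  (v 0 % 3 ≠ 1 ∧ v 1 % 3 ≠ 1 ∧ v 2 % 3 ≠ 1 ∧ v 3 % 3 ≠ 1 ∧
    (v 0 % 3 + v 1 % 3 + v 2 % 3 + v 3 % 3 = 4 ∨ v 0 % 3 + v 1 % 3 + v 2 % 3 + v 3 % 3 = 6))

set_option maxHeartbeats 4000000 in
theorem QInv_step (i : Fin 4) (v : Fin 4 → ℤ) (h : QInv v) : QInv ((Sgen i).mulVec v) := by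
  obtain ⟨⟨h0, h1, h2, h3⟩, k0, k1, k2, k3, k⟩ := h
  have k0' : v 0 % 3 = 0 ∨ v 0 % 3 = 2 := by omega
  have k1' : v 1 % 3 = 0 ∨ v 1 % 3 = 2 := by omega
  have k2' : v 2 % 3 = 0 ∨ v 2 % 3 = 2 := by omega
  have k3' : v 3 % 3 = 0 ∨ v 3 % 3 = 2 := by omega
  fin_cases i <;>
  · simp only [QInv, Sgen, Matrix.mulVec, dotProduct, Fin.sum_univ_four]
    simp
    refine ⟨by omega, ?_⟩
    clear h0 h1 h2 h3
    rcases k0' with a | a <;> rcases k1' with b | b <;> rcases k2' with c | c <;>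
      rcases k3' with d | d <;> omega

theorem QInv_word (l : List (Fin 4)) : QInv (((l.map Sgen).prod).mulVec rootQuadruple) := by
  induction l with
  | nil => simp [QInv, rootQuadruple]
  | cons i l ih =>
    rw [List.map_cons, List.prod_cons, ← Matrix.mulVec_mulVec]
    exact QInv_step i _ ih

theorem stmt12 :
    (∀ γ : Matrix (Fin 4) (Fin 4) ℤ, ApollonianMem γ → ∀ j : Fin 4,
      (γ.mulVec rootQuadruple) j % 24 ∈
        ({2, 3, 6, 11, 14, 15, 18, 23} : Set ℤ)) ∧
    (∀ n ∈ curvatures, n % 24 ∈ ({2, 3, 6, 11, 14, 15, 18, 23} : Set ℤ)) := by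
  have key : ∀ γ : Matrix (Fin 4) (Fin 4) ℤ, ApollonianMem γ → ∀ j : Fin 4,
      (γ.mulVec rootQuadruple) j % 24 ∈
        ({2, 3, 6, 11, 14, 15, 18, 23} : Set ℤ) := by
    rintro γ ⟨l, rfl⟩ j
    obtain ⟨⟨h0, h1, h2, h3⟩, k0, k1, k2, k3, -⟩ := QInv_word l
    simp only [Set.mem_insert_iff, Set.mem_singleton_iff]
    generalize ((l.map Sgen).prod).mulVec rootQuadruple = v at *
    fin_cases j <;> simp only [Fin.zero_eta, Fin.mk_one, Fin.reduceFinMk] <;> omega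
  refine ⟨key, ?_⟩
  rintro n ⟨γ, j, hγ, rfl⟩
  exact key γ hγ j
end
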